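/- For every integer d ≥ 1, every σ > 0, every ε > 0, and every integer N ≥ 1, one has ln N(ε + sqrt((2σ²)^N / N!), U_σ(B_2^d)) ≤ C(N−1+d, d) · ln(1 + 2/ε), where C(N−1+d, d) is the ordinary binomial coefficient. -/

import Mathlib

/-! The covering bound comes from truncating the basis expansion at degree `N`.

By the multinomial theorem, `∑_{|k| = n} e_k(x)² = exp (-t) tⁿ / n!` with `t = 2σ²‖x‖²`. Hence the
sum of `e_k(x)²` over any finite family of multi-indices of degree at least `N` is at most
`exp (-t) ∑_{n ≥ N} tⁿ / n! ≤ t^N / N!` (`sum_ek_sq_le`). By Cauchy-Schwarz, the part of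
`f = ∑ a_k e_k` of degree at least `N` is uniformly bounded on the unit ball by
`sqrt ((2σ²)^N / N!)`. The case `N = 0` says that `a ↦ ∑ a_k e_k` is a contraction from `ℓ²` to the
sup norm, so an `ε`-net of the Euclidean unit ball of the space of coefficients of degree less
than `N` yields an `ε`-net for the truncated functions. That space has dimension
`C(N - 1 + d, d)` (`card_lowDegree`), and the usual volume comparison (`exists_finset_cover_ball`)
gives a net with at most `(1 + 2/ε)` to that power many points. -/

open Real Filter MeasureTheory

/-- Generalized binomial coefficient `binom(t+d, d) = (1/d!) ∏_{i=1}^d (t+i)`. -/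
noncomputable def gbinom (t : ℝ) (d : ℕ) : ℝ :=
  (∏ i ∈ Finset.range d, (t + (i : ℝ) + 1)) / (Nat.factorial d : ℝ)

/-- Covering number of a set of real-valued functions w.r.t. the sup distance,
by bounded functions. -/
noncomputable def covN {α : Type*} (ε : ℝ) (A : Set (α → ℝ)) : ℕ :=
  sInf {n : ℕ | ∃ g : Fin n → (α → ℝ),
    (∀ i, ∃ C : ℝ, ∀ y, |g i y| ≤ C) ∧
    ∀ f ∈ A, ∃ i, ∀ y, |f y - g i y| ≤ ε}

/-- The functions `e_k^σ` forming an ONB of the Gaussian RKHS. -/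
noncomputable def ek (d : ℕ) (σ : ℝ) (k : Fin d → ℕ) (x : EuclideanSpace ℝ (Fin d)) : ℝ :=
  Real.sqrt ((2 * σ ^ 2) ^ (∑ i, k i) / ∏ i, (Nat.factorial (k i) : ℝ)) *
    (∏ i, x i ^ k i) * Real.exp (-σ ^ 2 * ‖x‖ ^ 2)

/-- The image `U_σ(Y)` of the closed unit ball of the Gaussian RKHS on `Y`. -/
noncomputable def UBall (d : ℕ) (σ : ℝ) (Y : Set (EuclideanSpace ℝ (Fin d))) :
    Set (Y → ℝ) :=
  {f | ∃ a : (Fin d → ℕ) → ℝ,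
    Summable (fun k => a k ^ 2) ∧ (∑' k, a k ^ 2) ≤ 1 ∧
    (∀ x : Y, Summable (fun k => |a k * ek d σ k ↑x|)) ∧
    (∀ x : Y, f x = ∑' k, a k * ek d σ k ↑x)}

/-- The closed Euclidean unit ball of `ℝ^d`. -/
def B2 (d : ℕ) : Set (EuclideanSpace ℝ (Fin d)) := Metric.closedBall 0 1

/-- In dimension `D`, an `ε`-separated subset of the unit ball has at most `(1 + 2/ε)^D` points: the
balls of radius `ε/2` around them are disjoint and contained in the ball of radius `1 + ε/2`. -/
lemma card_le_of_separated_unitBall {E : Type*} [NormedAddCommGroup E] [NormedSpace ℝ E]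
    [FiniteDimensional ℝ E] {ε : ℝ} (hε : 0 < ε) (s : Finset E) (hs : ∀ c ∈ s, ‖c‖ ≤ 1)
    (h : ∀ c ∈ s, ∀ c' ∈ s, c ≠ c' → ε ≤ ‖c - c'‖) :
    (s.card : ℝ) ≤ (1 + 2 / ε) ^ Module.finrank ℝ E := by
  borelize E
  let μ : Measure E := Measure.addHaar
  have hε2 : 0 < ε / 2 := by positivity
  have hρ : 0 < 1 + ε / 2 := by positivity
  have D : Set.Pairwise (s : Set E) (Function.onFun Disjoint fun c => Metric.ball c (ε / 2)) := by
    intro c hc c' hc' hcc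
    apply Metric.ball_disjoint_ball
    rw [dist_eq_norm]
    linarith [h c hc c' hc' hcc]
  have A_subset : (⋃ c ∈ s, Metric.ball c (ε / 2)) ⊆ Metric.ball (0 : E) (1 + ε / 2) := by
    refine Set.iUnion₂_subset fun x hx => ?_
    apply Metric.ball_subset_ball'
    rw [dist_zero_right]
    linarith [hs x hx]
  have I : (s.card : ENNReal) * ENNReal.ofReal ((ε / 2) ^ Module.finrank ℝ E) *
        μ (Metric.ball 0 1) ≤
      ENNReal.ofReal ((1 + ε / 2) ^ Module.finrank ℝ E) * μ (Metric.ball 0 1) :=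
    calc
      _ = μ (⋃ c ∈ s, Metric.ball c (ε / 2)) := by
        rw [measure_biUnion_finset D fun c _ => measurableSet_ball]
        simp only [μ.addHaar_ball_of_pos _ hε2]
        simp only [Finset.sum_const, nsmul_eq_mul, mul_assoc]
      _ ≤ μ (Metric.ball (0 : E) (1 + ε / 2)) := measure_mono A_subset
      _ = _ := by simp only [μ.addHaar_ball_of_pos _ hρ]
  have J := (ENNReal.mul_le_mul_iff_left (Metric.measure_ball_pos μ _ zero_lt_one).ne'
    measure_ball_lt_top.ne).1 I
  have K := ENNReal.toReal_le_of_le_ofReal (by positivity) J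
  rw [ENNReal.toReal_mul, ENNReal.toReal_natCast, ENNReal.toReal_ofReal (by positivity)] at K
  have e : 1 + 2 / ε = (1 + ε / 2) / (ε / 2) := by field_simp; ring
  rwa [e, div_pow, le_div_iff₀ (by positivity)]

/-- In dimension `D`, the unit ball has an `ε`-net with at most `(1 + 2/ε)^D` points, namely an
`ε`-separated subset of maximal cardinality. -/
lemma exists_finset_cover_ball (E : Type*) [NormedAddCommGroup E] [NormedSpace ℝ E]
    [FiniteDimensional ℝ E] {ε : ℝ} (hε : 0 < ε) :
    ∃ s : Finset E, (s.card : ℝ) ≤ (1 + 2 / ε) ^ Module.finrank ℝ E ∧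
      ∀ x : E, ‖x‖ ≤ 1 → ∃ c ∈ s, ‖x - c‖ ≤ ε := by
  classical
  let P : Set ℕ := {n | ∃ s : Finset E, s.card = n ∧ (∀ c ∈ s, ‖c‖ ≤ 1) ∧
    ∀ c ∈ s, ∀ c' ∈ s, c ≠ c' → ε ≤ ‖c - c'‖}
  have hne : P.Nonempty := ⟨0, ∅, by simp⟩
  have hbdd : BddAbove P := by
    refine ⟨⌊(1 + 2 / ε) ^ Module.finrank ℝ E⌋₊, ?_⟩
    rintro n ⟨s, rfl, h1, h2⟩
    exact Nat.le_floor (card_le_of_separated_unitBall hε s h1 h2)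
  obtain ⟨s, hcard, h1, h2⟩ := Nat.sSup_mem hne hbdd
  refine ⟨s, card_le_of_separated_unitBall hε s h1 h2, fun x hx => ?_⟩
  by_contra! hcon
  have hxs : x ∉ s := fun hxs => by
    have := hcon x hxs
    simp only [sub_self, norm_zero] at this
    linarith
  have hmem : s.card + 1 ∈ P := by
    refine ⟨insert x s, Finset.card_insert_of_notMem hxs, ?_, ?_⟩
    · intro c hc
      rcases Finset.mem_insert.1 hc with rfl | hc
      exacts [hx, h1 c hc]
    · intro c hc c' hc' hcc
      rcases Finset.mem_insert.1 hc with rfl | hcs <;>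
        rcases Finset.mem_insert.1 hc' with rfl | hcs'
      · exact absurd rfl hcc
      · exact (hcon c' hcs').le
      · rw [norm_sub_rev]
        exact (hcon c hcs).le
      · exact h2 c hcs c' hcs' hcc
  have := le_csSup hbdd hmem
  omega

/-- The multi-indices of degree less than `N`. -/
def lowDegree (d N : ℕ) : Finset (Fin d → ℕ) :=
  (Finset.range N).biUnion fun n => Finset.piAntidiag Finset.univ n

lemma mem_lowDegree {d N : ℕ} {k : Fin d → ℕ} : k ∈ lowDegree d N ↔ ∑ i, k i < N := by
  simp [lowDegree]

lemma card_lowDegree (d N : ℕ) (hd : 1 ≤ d) (hN : 1 ≤ N) :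
    (lowDegree d N).card = Nat.choose (N - 1 + d) d := by
  have hcard (n : ℕ) : (Finset.piAntidiag (Finset.univ : Finset (Fin d)) n).card
      = Nat.multichoose d n := by
    rw [← Finset.map_sym_eq_piAntidiag, Finset.card_map, Finset.sym_univ, Finset.card_univ,
      Sym.card_sym_eq_multichoose, Fintype.card_fin]
  have hsum (m : ℕ) : ∑ n ∈ Finset.range (m + 1), Nat.multichoose d n
      = Nat.multichoose (d + 1) m := by
    induction m with
    | zero => simp
    | succ m ih =>
      rw [Finset.sum_range_succ, ih, Nat.multichoose_succ_succ, add_comm]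
  obtain ⟨m, rfl⟩ := Nat.exists_eq_add_of_le' hN
  rw [lowDegree, Finset.card_biUnion]
  · simp only [hcard]
    rw [hsum, Nat.multichoose_eq, Nat.add_sub_cancel, ← Nat.choose_symm_add]
    congr 1
    omega
  · intro n _ m _ hnm
    rw [Function.onFun, Finset.disjoint_left]
    intro k hk hk'
    simp only [Finset.mem_piAntidiag] at hk hk'
    exact hnm (hk.1.symm.trans hk'.1)

lemma ek_sq (d : ℕ) (σ : ℝ) (k : Fin d → ℕ) (x : EuclideanSpace ℝ (Fin d)) :
    ek d σ k x ^ 2 = Real.exp (-(2 * σ ^ 2 * ‖x‖ ^ 2)) *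
      ((2 * σ ^ 2) ^ (∑ i, k i) / (∏ i, (Nat.factorial (k i) : ℝ)) * ∏ i, (x i ^ 2) ^ k i) := by
  have h : 0 ≤ (2 * σ ^ 2) ^ (∑ i, k i) / ∏ i, (Nat.factorial (k i) : ℝ) := by positivity
  rw [ek, mul_pow, mul_pow, Real.sq_sqrt h, ← Real.exp_nat_mul, ← Finset.prod_pow]
  simp_rw [← pow_mul, mul_comm _ 2]
  rw [mul_comm (Real.exp _)]
  congr 2
  simp
  ring

/-- The multinomial theorem for the squared basis functions of degree `n`. -/
lemma sum_ek_sq_antidiag (d : ℕ) (σ : ℝ) (x : EuclideanSpace ℝ (Fin d)) (n : ℕ) :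
    ∑ k ∈ Finset.piAntidiag Finset.univ n, ek d σ k x ^ 2 =
      Real.exp (-(2 * σ ^ 2 * ‖x‖ ^ 2)) *
        ((2 * σ ^ 2 * ‖x‖ ^ 2) ^ n / (Nat.factorial n : ℝ)) := by
  have hx : ‖x‖ ^ 2 = ∑ i, x i ^ 2 := by
    rw [EuclideanSpace.norm_sq_eq]
    simp
  simp_rw [ek_sq]
  rw [← Finset.mul_sum]
  congr 1
  rw [mul_pow (2 * σ ^ 2), hx, Finset.sum_pow_eq_sum_piAntidiag, Finset.mul_sum, Finset.sum_div]
  refine Finset.sum_congr rfl fun k hk => ?_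
  have hk' : ∑ i, k i = n := (Finset.mem_piAntidiag.1 hk).1
  have hm : (∏ i, (Nat.factorial (k i) : ℝ)) * (Nat.multinomial Finset.univ k : ℝ)
      = (Nat.factorial n : ℝ) := by
    rw [← hk']
    exact_mod_cast Nat.multinomial_spec Finset.univ k
  have hp : (∏ i, (Nat.factorial (k i) : ℝ)) ≠ 0 :=
    Finset.prod_ne_zero_iff.2 fun i _ => by positivity
  have hn : (Nat.factorial n : ℝ) ≠ 0 := by positivity
  rw [hk', div_mul_eq_mul_div,
    div_eq_div_iff hp hn, ← hm]
  ring

/-- The tail of the exponential series is at most its leading term times the full series, because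
`N! j! ≤ (N + j)!`. -/
lemma sum_Ico_pow_div_factorial_le {t : ℝ} (ht : 0 ≤ t) (N M : ℕ) :
    ∑ n ∈ Finset.Ico N M, t ^ n / (Nat.factorial n : ℝ) ≤
      t ^ N / (Nat.factorial N : ℝ) * Real.exp t := by
  rw [Finset.sum_Ico_eq_sum_range]
  refine le_trans ?_ (mul_le_mul_of_nonneg_left (Real.sum_le_exp_of_nonneg ht (M - N))
    (by positivity))
  rw [Finset.mul_sum]
  refine Finset.sum_le_sum fun j _ => ?_
  rw [div_mul_div_comm, ← pow_add]
  have : (Nat.factorial N : ℝ) * Nat.factorial j ≤ Nat.factorial (N + j) := by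
    exact_mod_cast Nat.le_of_dvd (Nat.factorial_pos _)
      (Nat.factorial_mul_factorial_dvd_factorial_add N j)
  gcongr

/-- The squared basis functions of degree at least `N` sum to at most `(2σ²)^N / N!` on the unit
ball. Finite subfamilies suffice, since the sum over all of them is a supremum. -/
lemma sum_ek_sq_le (d : ℕ) (σ : ℝ) (x : EuclideanSpace ℝ (Fin d)) (hx : ‖x‖ ≤ 1) (N : ℕ)
    (s : Finset (Fin d → ℕ)) (hs : ∀ k ∈ s, N ≤ ∑ i, k i) :
    ∑ k ∈ s, ek d σ k x ^ 2 ≤ (2 * σ ^ 2) ^ N / (Nat.factorial N : ℝ) := by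
  set t : ℝ := 2 * σ ^ 2 * ‖x‖ ^ 2 with ht
  have ht0 : 0 ≤ t := by positivity
  let M := s.sup (fun k => ∑ i, k i) + 1
  have hsub : s ⊆ (Finset.Ico N M).biUnion fun n => Finset.piAntidiag Finset.univ n := by
    intro k hk
    have h2 : ∑ i, k i ≤ s.sup (fun k => ∑ i, k i) :=
      Finset.le_sup (f := fun k : Fin d → ℕ => ∑ i, k i) hk
    simpa using ⟨hs k hk, Nat.lt_succ_of_le h2⟩
  calc ∑ k ∈ s, ek d σ k x ^ 2
      ≤ ∑ k ∈ (Finset.Ico N M).biUnion fun n => Finset.piAntidiag Finset.univ n,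
          ek d σ k x ^ 2 :=
        Finset.sum_le_sum_of_subset_of_nonneg hsub fun _ _ _ => sq_nonneg _
    _ = Real.exp (-t) * ∑ n ∈ Finset.Ico N M, t ^ n / (Nat.factorial n : ℝ) := by
        rw [Finset.sum_biUnion, Finset.mul_sum]
        · exact Finset.sum_congr rfl fun n _ => sum_ek_sq_antidiag d σ x n
        · intro n _ m _ hnm
          rw [Function.onFun, Finset.disjoint_left]
          intro k hk hk'
          simp only [Finset.mem_piAntidiag] at hk hk'
          exact hnm (hk.1.symm.trans hk'.1)
    _ ≤ Real.exp (-t) * (t ^ N / (Nat.factorial N : ℝ) * Real.exp t) := by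
        gcongr
        exact sum_Ico_pow_div_factorial_le ht0 N M
    _ = t ^ N / (Nat.factorial N : ℝ) := by
        rw [mul_comm, mul_assoc, ← Real.exp_add]
        simp
    _ ≤ _ := by
        have : t ≤ 2 * σ ^ 2 := by
          rw [ht]
          exact mul_le_of_le_one_right (by positivity) (pow_le_one₀ (norm_nonneg x) hx)
        gcongr

/-- Cauchy-Schwarz against `sum_ek_sq_le`. -/
lemma abs_sum_mul_ek_le (d : ℕ) (σ : ℝ) (x : EuclideanSpace ℝ (Fin d)) (hx : ‖x‖ ≤ 1) (N : ℕ)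
    (s : Finset (Fin d → ℕ)) (hs : ∀ k ∈ s, N ≤ ∑ i, k i) (a : (Fin d → ℕ) → ℝ) {r : ℝ}
    (hr : 0 ≤ r) (ha : ∑ k ∈ s, a k ^ 2 ≤ r ^ 2) :
    |∑ k ∈ s, a k * ek d σ k x| ≤
      r * Real.sqrt ((2 * σ ^ 2) ^ N / (Nat.factorial N : ℝ)) := by
  have h0 : 0 ≤ (2 * σ ^ 2) ^ N / (Nat.factorial N : ℝ) := by positivity
  refine abs_le_of_sq_le_sq ?_ (by positivity)
  rw [mul_pow, Real.sq_sqrt h0]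
  exact (Finset.sum_mul_sq_le_sq_mul_sq s a _).trans
    (mul_le_mul ha (sum_ek_sq_le d σ x hx N s hs) (Finset.sum_nonneg fun _ _ => sq_nonneg _)
      (sq_nonneg r))

/-- Truncating a function of `UBall` to degree less than `N` costs at most `sqrt ((2σ²)^N / N!)`
on the unit ball. -/
lemma abs_tsum_sub_sum_lowDegree_le (d : ℕ) (σ : ℝ) (x : EuclideanSpace ℝ (Fin d))
    (hx : ‖x‖ ≤ 1) (N : ℕ) (a : (Fin d → ℕ) → ℝ) (ha : Summable fun k => a k ^ 2)
    (ha1 : ∑' k, a k ^ 2 ≤ 1) (hsum : Summable fun k => a k * ek d σ k x) :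
    |∑' k, a k * ek d σ k x - ∑ k ∈ lowDegree d N, a k * ek d σ k x| ≤
      Real.sqrt ((2 * σ ^ 2) ^ N / (Nat.factorial N : ℝ)) := by
  classical
  have hlim := (hsum.hasSum.sub_const (∑ k ∈ lowDegree d N, a k * ek d σ k x)).abs
  refine le_of_tendsto hlim ?_
  filter_upwards [eventually_ge_atTop (lowDegree d N)] with s hs
  rw [← Finset.sum_sdiff hs, add_sub_cancel_right]
  have := abs_sum_mul_ek_le d σ x hx N (s \ lowDegree d N)
    (fun k hk => by simpa [mem_lowDegree] using (Finset.mem_sdiff.1 hk).2) a zero_le_one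
    (by
      rw [one_pow]
      exact (ha.sum_le_tsum _ fun _ _ => sq_nonneg _).trans ha1)
  rwa [one_mul] at this

theorem log_covN_UBall_le_choose (d : ℕ) (hd : 1 ≤ d) (σ : ℝ) (hσ : 0 < σ)
    (ε : ℝ) (hε : 0 < ε) (N : ℕ) (hN : 1 ≤ N) :
    Real.log (covN (ε + Real.sqrt ((2 * σ ^ 2) ^ N / (Nat.factorial N : ℝ)))
        (UBall d σ (B2 d))) ≤
      (Nat.choose (N - 1 + d) d : ℝ) * Real.log (1 + 2 / ε) := by
  obtain ⟨s, hcard, hcover⟩ :=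
    exists_finset_cover_ball (EuclideanSpace ℝ (lowDegree d N)) hε
  rw [finrank_euclideanSpace, Fintype.card_coe, card_lowDegree d N hd hN] at hcard
  have hB (x : B2 d) : ‖(x : EuclideanSpace ℝ (Fin d))‖ ≤ 1 := by simpa [B2] using x.2
  -- The case `N = 0` of the tail estimate: the synthesis map contracts `ℓ²` to the sup norm.
  have hhead (v : EuclideanSpace ℝ (lowDegree d N)) (x : B2 d) :
      |∑ k : lowDegree d N, v k * ek d σ k x| ≤ ‖v‖ := by
    let b : (Fin d → ℕ) → ℝ := fun k => if h : k ∈ lowDegree d N then v ⟨k, h⟩ else 0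
    have hb (k : lowDegree d N) : b k = v k := by simp [b]
    have hv : ∑ k ∈ lowDegree d N, b k ^ 2 ≤ ‖v‖ ^ 2 := by
      rw [← Finset.sum_coe_sort, EuclideanSpace.norm_sq_eq]
      simp [hb]
    have := abs_sum_mul_ek_le d σ x (hB x) 0 (lowDegree d N) (fun _ _ => Nat.zero_le _) b
      (norm_nonneg v) hv
    rw [← Finset.sum_coe_sort] at this
    simpa [hb] using this
  have hmem : covN (ε + Real.sqrt ((2 * σ ^ 2) ^ N / (Nat.factorial N : ℝ)))
      (UBall d σ (B2 d)) ≤ s.card := by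
    refine Nat.sInf_le ⟨fun i x => ∑ k : lowDegree d N,
      (s.equivFin.symm i : EuclideanSpace ℝ (lowDegree d N)) k * ek d σ k x,
      fun i => ⟨_, hhead _⟩, ?_⟩
    rintro f ⟨a, ha, ha1, hsum, hf⟩
    let v : EuclideanSpace ℝ (lowDegree d N) := WithLp.toLp 2 fun k => a k
    have hv : ‖v‖ ≤ 1 := by
      rw [← sq_le_one_iff₀ (norm_nonneg v), EuclideanSpace.norm_sq_eq]
      simp only [v, Real.norm_eq_abs, sq_abs]
      rw [Finset.sum_coe_sort (lowDegree d N) fun k => a k ^ 2]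
      exact (ha.sum_le_tsum _ fun _ _ => sq_nonneg _).trans ha1
    obtain ⟨c, hc, hvc⟩ := hcover v hv
    refine ⟨s.equivFin ⟨c, hc⟩, fun x => ?_⟩
    have h1 := abs_tsum_sub_sum_lowDegree_le d σ x (hB x) N a ha ha1 (hsum x).of_abs
    have h2 := (hhead (v - c) x).trans hvc
    rw [← Finset.sum_coe_sort] at h1
    simp only [PiLp.sub_apply, sub_mul, Finset.sum_sub_distrib, v] at h2
    simp only [Equiv.symm_apply_apply, hf x]
    refine (abs_sub_le _ _ _).trans ((add_le_add h1 h2).trans_eq (add_comm _ _))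
  have hpos : 0 < 1 + 2 / ε := by positivity
  rw [← Real.log_pow]
  -- A vanishing covering number would make the left side `Real.log 0 = 0`.
  rcases Nat.eq_zero_or_pos (covN (ε + Real.sqrt ((2 * σ ^ 2) ^ N / (Nat.factorial N : ℝ)))
      (UBall d σ (B2 d))) with h0 | h0
  · rw [h0, Nat.cast_zero, Real.log_zero]
    exact Real.log_nonneg (one_le_pow₀ (le_add_of_nonneg_right (by positivity)))
  · exact Real.log_le_log (by exact_mod_cast h0) ((Nat.cast_le.2 hmem).trans hcard)
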